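/- Let μ ∈ (0,∞) be fixed and let F_T be a probability distribution on [0,∞) (the distribution of a nonnegative random variable T). Then 0 ≤ E[T] < 1 holds if and only if the functional equation of compound-Poisson type F̂(s) = exp(−σ(s)) for all s ≥ 0 has exactly one solution: a probability distribution F on [0,∞) with mean μ and finite second moment (here σ is built from the unknown F, F_T and μ). Moreover, the unique solution F satisfies Var[F] = (E[T]/(1 − E[T]))·μ². -/

import Mathlib

/-!
Everything is read off from the expansion of the Laplace transform at `0`. The condition
`1 - μ s ≤ F̂(s) ≤ 1 - μ s + C s² / 2` for all `s ≥ 0` (`Good μ C F`) holds for every solution with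
`C` its second moment; conversely it forces mean `μ` and a finite second moment
(`Good.moments`, by Fatou), and it passes to pointwise limits.

*Necessity and variance.* Divide `F̂ = exp(-σ)` by `s²` and let `s ↓ 0`. With `m₂` the second moment
of `F`, the integrand of `(μ s - σ(s)) / s²` tends to `t m₂ / 2`, and is at most that. Fatou's lemma
from one side and this bound from the other give `m₂ - μ² = E[T] m₂` (`Sol.second_moment`), where
finiteness of `E[T]` is part of the conclusion because `m₂ > 0`. Hence `m₂ (1 - E[T]) = μ² > 0`,
which yields both `E[T] < 1` and the variance formula.

*Uniqueness.* The map `F̂ ↦ exp(-σ)` multiplies `sup |F̂(s) - Ĝ(s)| / s²` by at most `E[T] < 1`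
(`contraction`), and this supremum is finite for two solutions. So their transforms agree, and the
transform determines the law (`ext_LS`, by density of polynomials in `e^{-x}`).

*Existence.* `exp(-σ)` is a Laplace transform (`exists_step`): it is a limit of
`(1 - σₙ / n)ⁿ`, where `1 - σₙ / n` is the transform of a mixture of scaled copies of `F` and `δ₀`,
and limits of transforms with a common lower bound `1 - μ s` are transforms by Prokhorov's theorem
(`exists_LS_of_tendsto`). With `C = μ² / (1 - E[T])` the step preserves `Good μ C`, since
`E[T] C + μ² = C`. Iterating from `δ_μ`, whose transform lies below that of its image, gives
increasing transforms; their limit is a solution by dominated convergence.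
-/

open MeasureTheory

/-- Laplace–Stieltjes transform of a (nonnegative) probability distribution. -/
noncomputable def LS (F : Measure ℝ) (s : ℝ) : ℝ := ∫ x, Real.exp (-(s * x)) ∂F

/-- `σ(s) = ∫₀^∞ (1 − F̂(ts))/t dF_T(t)`, with the integrand at `t = 0` equal to `μ s`. -/
noncomputable def sigmaT (F FT : Measure ℝ) (μ : ℝ) (s : ℝ) : ℝ :=
  ∫ t, (if t = 0 then μ * s else (1 - LS F (t * s)) / t) ∂FT

/-- `F` is a solution: a probability distribution on `[0,∞)` with mean `μ`, finite second
moment, satisfying the compound-Poisson type equation `F̂(s) = exp(−σ(s))` for all `s ≥ 0`. -/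
def Sol (FT : Measure ℝ) (μ : ℝ) (F : Measure ℝ) : Prop :=
  IsProbabilityMeasure F ∧ F (Set.Iio 0) = 0 ∧ (∫ x, x ∂F) = μ ∧
  Integrable (fun x => x ^ 2) F ∧
  ∀ s : ℝ, 0 ≤ s → LS F s = Real.exp (-(sigmaT F FT μ s))

/-! ### Laplace transforms of distributions on `[0,∞)` -/

open Filter Topology Set
open scoped ENNReal NNReal BoundedContinuousFunction

/-- `F` is a probability distribution on `[0,∞)`. -/
def IsPD (F : Measure ℝ) : Prop := IsProbabilityMeasure F ∧ F (Set.Iio 0) = 0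

lemma ae_nonneg_of_Iio {F : Measure ℝ} (h : F (Set.Iio 0) = 0) : ∀ᵐ x ∂F, 0 ≤ x := by
  rw [ae_iff]
  simpa [Set.Iio] using h

lemma Iio_of_ae_nonneg {F : Measure ℝ} (h : ∀ᵐ x ∂F, 0 ≤ x) : F (Set.Iio 0) = 0 := by
  rw [ae_iff] at h
  simpa [Set.Iio] using h

lemma IsPD.ae {F : Measure ℝ} (h : IsPD F) : ∀ᵐ x ∂F, 0 ≤ x := ae_nonneg_of_Iio h.2

lemma integrable_exp {F : Measure ℝ} (h : IsPD F) {s : ℝ} (hs : 0 ≤ s) :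
    Integrable (fun x => Real.exp (-(s * x))) F := by
  have := h.1
  refine Integrable.of_bound (C := 1) (by fun_prop) ?_
  filter_upwards [h.ae] with x hx
  rw [Real.norm_eq_abs, Real.abs_exp, Real.exp_le_one_iff]
  have := mul_nonneg hs hx
  linarith

lemma LS_nonneg (F : Measure ℝ) (s : ℝ) : 0 ≤ LS F s :=
  integral_nonneg fun _ => (Real.exp_pos _).le

lemma LS_le_one {F : Measure ℝ} (h : IsPD F) {s : ℝ} (hs : 0 ≤ s) : LS F s ≤ 1 := by
  have := h.1
  calc LS F s ≤ ∫ _, (1 : ℝ) ∂F := by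
        refine integral_mono_ae (integrable_exp h hs) (integrable_const _) ?_
        filter_upwards [h.ae] with x hx
        rw [Real.exp_le_one_iff]
        have := mul_nonneg hs hx
        linarith
    _ = 1 := by simp

lemma measurable_LS (F : Measure ℝ) [SFinite F] : Measurable (LS F) := by
  have : StronglyMeasurable (fun s => ∫ x, Real.exp (-(s * x)) ∂F) := by
    refine StronglyMeasurable.integral_prod_right
      (f := fun s x => Real.exp (-(s * x))) ?_
    exact (by fun_prop : Continuous (Function.uncurry fun s x : ℝ =>
      Real.exp (-(s * x)))).stronglyMeasurable
  exact this.measurable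

/-- The function `x ↦ e^{-x}` on `[0,∞)`, as a bounded continuous function. -/
noncomputable def expB : ℝ≥0 →ᵇ ℝ :=
  BoundedContinuousFunction.mkOfBound ⟨fun x => Real.exp (-(x : ℝ)), by fun_prop⟩ 2 (by
    intro x y
    have h1 : Real.exp (-(x : ℝ)) ≤ 1 := Real.exp_le_one_iff.2 (by simp)
    have h2 : Real.exp (-(y : ℝ)) ≤ 1 := Real.exp_le_one_iff.2 (by simp)
    have h3 := Real.exp_pos (-(x : ℝ))
    have h4 := Real.exp_pos (-(y : ℝ))
    simp only [ContinuousMap.coe_mk, Real.dist_eq, abs_le]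
    constructor <;> linarith)

@[simp] lemma expB_apply (x : ℝ≥0) : expB x = Real.exp (-(x : ℝ)) := rfl

lemma integral_expB_pow {F : Measure ℝ} (hF : IsPD F) (n : ℕ) :
    ∫ x, (expB ^ n) x ∂(F.map Real.toNNReal) = LS F n := by
  rw [integral_map (by fun_prop) (by fun_prop)]
  refine integral_congr_ae ?_
  filter_upwards [hF.ae] with x hx
  simp [hx, ← Real.exp_nat_mul]

/-- The real star subalgebra generated by `x ↦ e^{-x}`. -/
noncomputable def expAlg : StarSubalgebra ℝ (ℝ≥0 →ᵇ ℝ) :=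
  { Algebra.adjoin ℝ {expB} with
    star_mem' := by
      intro a ha
      have : star a = a := by ext x; simp
      rw [this]; exact ha }

/-- A probability distribution on `[0,∞)` is determined by its Laplace transform: already its
values at the natural numbers give the integrals of all polynomials in `e^{-x}`. -/
lemma ext_LS {F G : Measure ℝ} (hF : IsPD F) (hG : IsPD G)
    (h : ∀ s, 0 ≤ s → LS F s = LS G s) : F = G := by
  have := hF.1
  have := hG.1
  have hm : F.map Real.toNNReal = G.map Real.toNNReal := by
    have : IsProbabilityMeasure (F.map Real.toNNReal) :=
      Measure.isProbabilityMeasure_map (by fun_prop)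
    have : IsProbabilityMeasure (G.map Real.toNNReal) :=
      Measure.isProbabilityMeasure_map (by fun_prop)
    refine ext_of_forall_mem_subalgebra_integral_eq_of_polish (𝕜 := ℝ) (A := expAlg) ?_ ?_
    · intro x y hxy
      refine ⟨expB, ⟨expB, ⟨expB, ?_, rfl⟩, rfl⟩, ?_⟩
      · exact Algebra.subset_adjoin (Set.mem_singleton _)
      · simpa using hxy
    · intro g hg
      have hg' : g ∈ Algebra.adjoin ℝ {expB} := hg
      rw [Algebra.adjoin_singleton_eq_range_aeval] at hg'
      obtain ⟨p, rfl⟩ := hg'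
      change ∫ x, (Polynomial.aeval expB p) x ∂_ = ∫ x, (Polynomial.aeval expB p) x ∂_
      rw [Polynomial.aeval_eq_sum_range]
      simp only [BoundedContinuousFunction.sum_apply, BoundedContinuousFunction.smul_apply]
      rw [integral_finsetSum, integral_finsetSum]
      · refine Finset.sum_congr rfl fun i _ => ?_
        simp only [integral_smul]
        rw [integral_expB_pow hF, integral_expB_pow hG, h _ (Nat.cast_nonneg i)]
      · exact fun i _ => (BoundedContinuousFunction.integrable _ (expB ^ i)).const_mul (p.coeff i)
      · exact fun i _ => (BoundedContinuousFunction.integrable _ (expB ^ i)).const_mul (p.coeff i)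
  have key : ∀ {H : Measure ℝ}, IsPD H →
      (H.map Real.toNNReal).map (fun x : ℝ≥0 => (x : ℝ)) = H := by
    intro H hH
    rw [Measure.map_map (by fun_prop) (by fun_prop)]
    conv_rhs => rw [← Measure.map_id (μ := H)]
    refine Measure.map_congr ?_
    filter_upwards [hH.ae] with x hx
    simp [hx]
  rw [← key hF, ← key hG, hm]

/-- Closure of Laplace transforms under pointwise limits, with a linear lower bound guaranteeing
tightness. -/
lemma exists_LS_of_tendsto {μ : ℝ} {F : ℕ → Measure ℝ} (hF : ∀ n, IsPD (F n)) {f : ℝ → ℝ}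
    (hb : ∀ n s, 0 ≤ s → 1 - μ * s ≤ LS (F n) s)
    (hf : ∀ s, 0 ≤ s → Tendsto (fun n => LS (F n) s) atTop (𝓝 (f s))) :
    ∃ G, IsPD G ∧ ∀ s, 0 ≤ s → LS G s = f s := by
  have := fun n => (hF n).1
  let P : ℕ → ProbabilityMeasure ℝ := fun n => ⟨F n, (hF n).1⟩
  -- the mass beyond `1 / s` is at most `2 μ s`, because `1 - e^{-sx} ≥ 1 - e^{-1} ≥ 1 / 2` there
  have htail : ∀ n, ∀ s, 0 < s →
      (F n) (Set.Icc 0 (1 / s))ᶜ ≤ ENNReal.ofReal (2 * (μ * s)) := by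
    intro n s hs
    have h1 : (F n).real (Set.Icc 0 (1 / s))ᶜ * (1 / 2) ≤ ∫ x, (1 - Real.exp (-(s * x))) ∂(F n) := by
      have hm : MeasurableSet (Set.Icc 0 (1 / s))ᶜ := measurableSet_Icc.compl
      have h3 : ∫ x, (Set.Icc 0 (1 / s))ᶜ.indicator (fun _ => (1 / 2 : ℝ)) x ∂(F n)
          = (F n).real (Set.Icc 0 (1 / s))ᶜ * (1 / 2) := by
        rw [integral_indicator hm]; simp
      rw [← h3]
      refine integral_mono_ae ((integrable_const _).indicator hm)
        ((integrable_const _).sub (integrable_exp (hF n) hs.le)) ?_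
      filter_upwards [(hF n).ae] with x hx
      by_cases hxm : x ∈ (Set.Icc 0 (1 / s))ᶜ
      · rw [Set.indicator_of_mem hxm]
        have h5 : 1 / s < x := by
          by_contra! hc
          exact hxm ⟨hx, hc⟩
        have h6 : 1 ≤ s * x := by
          rw [div_lt_iff₀ hs] at h5; linarith
        have h7 : Real.exp (-(s * x)) ≤ Real.exp (-1) := Real.exp_le_exp.2 (by linarith)
        have h8 := Real.exp_neg_one_lt_d9
        linarith
      · rw [Set.indicator_of_notMem hxm]
        have h7 : Real.exp (-(s * x)) ≤ 1 :=
          Real.exp_le_one_iff.2 (by have := mul_nonneg hs.le hx; linarith)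
        linarith
    rw [integral_sub (integrable_const _) (integrable_exp (hF n) hs.le)] at h1
    have h2 := hb n s hs.le
    simp only [LS] at h2
    simp only [integral_const, probReal_univ, smul_eq_mul, mul_one] at h1
    rw [← ENNReal.ofReal_toReal (measure_ne_top (F n) _)]
    refine ENNReal.ofReal_le_ofReal ?_
    simp only [Measure.real] at h1
    linarith
  have htight : IsTightMeasureSet {((m : ProbabilityMeasure ℝ) : Measure ℝ) | m ∈ Set.range P} := by
    rw [isTightMeasureSet_iff_exists_isCompact_measure_compl_le]
    intro ε hε
    have hlim : Tendsto (fun s : ℝ => ENNReal.ofReal (2 * (μ * s))) (𝓝[>] 0) (𝓝 0) := by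
      have : Tendsto (fun s : ℝ => ENNReal.ofReal (2 * (μ * s))) (𝓝 0)
          (𝓝 (ENNReal.ofReal (2 * (μ * 0)))) :=
        (ENNReal.continuous_ofReal.comp (by fun_prop : Continuous fun s : ℝ => 2 * (μ * s))).tendsto 0
      simp only [mul_zero, ENNReal.ofReal_zero] at this
      exact this.mono_left nhdsWithin_le_nhds
    obtain ⟨s, hs1, hs2⟩ := ((hlim.eventually (eventually_lt_nhds hε)).and
      (self_mem_nhdsWithin)).exists
    refine ⟨Set.Icc 0 (1 / s), isCompact_Icc, ?_⟩
    rintro _ ⟨_, ⟨n, rfl⟩, rfl⟩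
    exact (htail n s hs2).trans hs1.le
  obtain ⟨Q, -, φ, hφ, hQ⟩ := (isCompact_closure_of_isTightMeasureSet htight).tendsto_subseq
    (fun n => subset_closure (Set.mem_range_self n) : ∀ n, P n ∈ _)
  have hQ0 : IsPD (Q : Measure ℝ) := by
    refine ⟨Q.2, ?_⟩
    have := ProbabilityMeasure.le_liminf_measure_open_of_tendsto hQ (isOpen_Iio (a := (0:ℝ)))
    have h0 : ∀ n, (((P ∘ φ) n : ProbabilityMeasure ℝ) : Measure ℝ) (Set.Iio 0) = 0 :=
      fun n => (hF (φ n)).2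
    simp only [h0, liminf_const] at this
    simpa using this
  refine ⟨Q, hQ0, fun s hs => ?_⟩
  let g : ℝ →ᵇ ℝ := BoundedContinuousFunction.mkOfBound
    ⟨fun x => Real.exp (-(s * max x 0)), by fun_prop⟩ 2 (by
      have h1 : ∀ x, Real.exp (-(s * max x 0)) ≤ 1 := fun x => Real.exp_le_one_iff.2 (by
        have := mul_nonneg hs (le_max_right x 0)
        linarith)
      intro x y
      have h3 := Real.exp_pos (-(s * max x 0))
      have h4 := Real.exp_pos (-(s * max y 0))
      have h5 := h1 x
      have h6 := h1 y
      simp only [ContinuousMap.coe_mk, Real.dist_eq, abs_le]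
      constructor <;> linarith)
  have hg : ∀ {H : Measure ℝ}, IsPD H → ∫ x, g x ∂H = LS H s := by
    intro H hH
    refine integral_congr_ae ?_
    filter_upwards [hH.ae] with x hx
    simp [g, hx]
  have := (ProbabilityMeasure.tendsto_iff_forall_integral_tendsto.1 hQ) g
  rw [hg hQ0] at this
  refine tendsto_nhds_unique this ?_
  refine ((hf s hs).comp hφ.tendsto_atTop).congr fun n => ?_
  exact (hg (hF (φ n))).symm

/-- Convolution powers: the powers of a Laplace transform are Laplace transforms. -/
lemma exists_LS_pow {F : Measure ℝ} (hF : IsPD F) (n : ℕ) :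
    ∃ G, IsPD G ∧ ∀ s, 0 ≤ s → LS G s = LS F s ^ n := by
  have := hF.1
  induction n with
  | zero =>
    refine ⟨Measure.dirac 0, ⟨inferInstance, by simp⟩, fun s _ => by simp [LS]⟩
  | succ n ih =>
    obtain ⟨G, hG, h⟩ := ih
    have := hG.1
    have hpos : ∀ᵐ x ∂(G.conv F), 0 ≤ x := by
      rw [Measure.conv, ae_map_iff (by fun_prop) (measurableSet_le (by fun_prop) (by fun_prop))]
      have h1 : ∀ᵐ p ∂(G.prod F), 0 ≤ p.1 := Measure.quasiMeasurePreserving_fst.ae hG.ae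
      have h2 : ∀ᵐ p ∂(G.prod F), 0 ≤ p.2 := Measure.quasiMeasurePreserving_snd.ae hF.ae
      filter_upwards [h1, h2] with p h1 h2 using add_nonneg h1 h2
    have hPD : IsPD (G.conv F) := ⟨inferInstance, Iio_of_ae_nonneg hpos⟩
    refine ⟨G.conv F, hPD, fun s hs => ?_⟩
    have hi := integrable_exp hPD hs
    rw [pow_succ, ← h s hs, LS, integral_conv hi]
    simp only [mul_add, neg_add, Real.exp_add, integral_const_mul, integral_mul_const]
    rfl

/-! ### Second-order bounds and moments -/

lemma exp_neg_le_quadratic {x : ℝ} (hx : 0 ≤ x) : Real.exp (-x) ≤ 1 - x + x ^ 2 / 2 := by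
  have hd : ∀ y : ℝ, HasDerivAt (fun y => 1 - y + y ^ 2 / 2 - Real.exp (-y))
      (-1 + y + Real.exp (-y)) y := by
    intro y
    have h1 := (((hasDerivAt_id y).const_sub 1).add (((hasDerivAt_id y).pow 2).div_const 2)).sub
      ((hasDerivAt_id y).neg.exp)
    refine HasDerivAt.congr_deriv h1 ?_
    simp
  have hmono : MonotoneOn (fun y => 1 - y + y ^ 2 / 2 - Real.exp (-y)) (Set.Ici 0) := by
    refine monotoneOn_of_deriv_nonneg (convex_Ici 0) (by fun_prop)
      (fun y _ => (hd y).differentiableAt.differentiableWithinAt) fun y hy => ?_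
    rw [(hd y).deriv]
    have := Real.one_sub_le_exp_neg y
    linarith
  have := hmono (Set.mem_Ici.2 le_rfl) (Set.mem_Ici.2 hx) hx
  simp at this
  linarith

lemma cubic_le_exp_neg {x : ℝ} (hx : 0 ≤ x) :
    1 - x + x ^ 2 / 2 - x ^ 3 / 6 ≤ Real.exp (-x) := by
  have hd : ∀ y : ℝ, HasDerivAt (fun y => Real.exp (-y) - (1 - y + y ^ 2 / 2 - y ^ 3 / 6))
      (-Real.exp (-y) - (-1 + y - y ^ 2 / 2)) y := by
    intro y
    have h1 := ((hasDerivAt_id y).neg.exp).sub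
      ((((hasDerivAt_id y).const_sub 1).add (((hasDerivAt_id y).pow 2).div_const 2)).sub
        (((hasDerivAt_id y).pow 3).div_const 6))
    refine HasDerivAt.congr_deriv h1 ?_
    simp
    ring
  have hmono : MonotoneOn (fun y => Real.exp (-y) - (1 - y + y ^ 2 / 2 - y ^ 3 / 6))
      (Set.Ici 0) := by
    refine monotoneOn_of_deriv_nonneg (convex_Ici 0) (by fun_prop)
      (fun y _ => (hd y).differentiableAt.differentiableWithinAt) fun y hy => ?_
    rw [interior_Ici] at hy
    rw [(hd y).deriv]
    have := exp_neg_le_quadratic (le_of_lt hy)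
    linarith
  have := hmono (Set.mem_Ici.2 le_rfl) (Set.mem_Ici.2 hx) hx
  simp at this
  linarith

/-- `1 - μ s ≤ F̂(s) ≤ 1 - μ s + C s² / 2` for all `s ≥ 0`: the form in which having mean `μ` and
second moment at most `C` is visible on the Laplace transform and passes to pointwise limits. -/
def Good (μ C : ℝ) (F : Measure ℝ) : Prop :=
  IsPD F ∧ ∀ s, 0 ≤ s → 1 - μ * s ≤ LS F s ∧ LS F s ≤ 1 - μ * s + C * s ^ 2 / 2

/-- A form of Fatou's lemma for real integrals. -/
lemma fatou_real {α : Type*} [MeasurableSpace α] {P : Measure α} {G : ℕ → α → ℝ} {f : α → ℝ}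
    {c : ℕ → ℝ} {L : ℝ}
    (hlim : ∀ᵐ x ∂P, Tendsto (fun n => G n x) atTop (𝓝 (f x)))
    (hint : ∀ n, Integrable (G n) P) (hnn : ∀ n, ∀ᵐ x ∂P, 0 ≤ G n x)
    (hc : ∀ n, ∫ x, G n x ∂P ≤ c n) (hL : Tendsto c atTop (𝓝 L)) :
    Integrable f P ∧ ∫ x, f x ∂P ≤ L := by
  have hae : ∀ᵐ x ∂P, 0 ≤ f x := by
    filter_upwards [hlim, ae_all_iff.2 hnn] with x h1 h2
    exact ge_of_tendsto' h1 h2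
  have hm : AEStronglyMeasurable f P :=
    aestronglyMeasurable_of_tendsto_ae _ (fun n => (hint n).1) hlim
  have hle : ∫⁻ x, ENNReal.ofReal (f x) ∂P ≤ ENNReal.ofReal L := by
    calc ∫⁻ x, ENNReal.ofReal (f x) ∂P
        = ∫⁻ x, liminf (fun n => ENNReal.ofReal (G n x)) atTop ∂P := by
          refine lintegral_congr_ae ?_
          filter_upwards [hlim] with x hx
          exact ((ENNReal.continuous_ofReal.tendsto _).comp hx).liminf_eq.symm
      _ ≤ liminf (fun n => ∫⁻ x, ENNReal.ofReal (G n x) ∂P) atTop :=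
          lintegral_liminf_le' fun n => (hint n).1.aemeasurable.ennreal_ofReal
      _ ≤ liminf (fun n => ENNReal.ofReal (c n)) atTop := by
          refine liminf_le_liminf (Eventually.of_forall fun n => ?_)
          rw [← ofReal_integral_eq_lintegral_ofReal (hint n) (hnn n)]
          exact ENNReal.ofReal_le_ofReal (hc n)
      _ = ENNReal.ofReal L := ((ENNReal.continuous_ofReal.tendsto _).comp hL).liminf_eq
  have hi : Integrable f P := by
    refine ⟨hm, ?_⟩
    rw [hasFiniteIntegral_iff_ofReal hae]
    exact hle.trans_lt ENNReal.ofReal_lt_top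
  refine ⟨hi, ?_⟩
  have hL0 : 0 ≤ L := ge_of_tendsto' hL fun n => (integral_nonneg_of_ae (hnn n)).trans (hc n)
  rw [← ofReal_integral_eq_lintegral_ofReal hi hae] at hle
  exact (ENNReal.ofReal_le_ofReal_iff hL0).1 hle

/-- A sequence of positive reals tending to `0`. -/
noncomputable def stp (n : ℕ) : ℝ := 1 / ((n : ℝ) + 1)

lemma stp_pos (n : ℕ) : 0 < stp n := by unfold stp; positivity

lemma tendsto_stp : Tendsto stp atTop (𝓝 0) := tendsto_one_div_add_atTop_nhds_zero_nat

lemma tendsto_stp' : Tendsto stp atTop (𝓝[>] 0) :=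
  tendsto_nhdsWithin_iff.2 ⟨tendsto_stp, Eventually.of_forall stp_pos⟩

/-- `(e^{-sx} - 1 + sx) / s² → x² / 2` as `s ↓ 0`. -/
lemma tendsto_second_order {x : ℝ} (hx : 0 ≤ x) :
    Tendsto (fun s => (Real.exp (-(s * x)) - 1 + s * x) / s ^ 2) (𝓝[>] 0) (𝓝 (x ^ 2 / 2)) := by
  have h1 : Tendsto (fun s : ℝ => x ^ 2 / 2 - s * (x ^ 3 / 6)) (𝓝[>] 0) (𝓝 (x ^ 2 / 2)) := by
    have : Tendsto (fun s : ℝ => x ^ 2 / 2 - s * (x ^ 3 / 6)) (𝓝 0)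
        (𝓝 (x ^ 2 / 2 - 0 * (x ^ 3 / 6))) :=
      (by fun_prop : Continuous fun s : ℝ => x ^ 2 / 2 - s * (x ^ 3 / 6)).tendsto 0
    simp only [zero_mul, sub_zero] at this
    exact this.mono_left nhdsWithin_le_nhds
  refine tendsto_of_tendsto_of_tendsto_of_le_of_le' h1 tendsto_const_nhds ?_ ?_
  · filter_upwards [self_mem_nhdsWithin] with s hs
    have hs : 0 < s := hs
    rw [le_div_iff₀ (by positivity)]
    have := cubic_le_exp_neg (mul_nonneg hs.le hx)
    nlinarith
  · filter_upwards [self_mem_nhdsWithin] with s hs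
    have hs : 0 < s := hs
    rw [div_le_iff₀ (by positivity)]
    have := exp_neg_le_quadratic (mul_nonneg hs.le hx)
    nlinarith

lemma tendsto_first_order {x : ℝ} (hx : 0 ≤ x) :
    Tendsto (fun s => (1 - Real.exp (-(s * x))) / s) (𝓝[>] 0) (𝓝 x) := by
  have h1 : Tendsto (fun s : ℝ => x - s * (x ^ 2 / 2)) (𝓝[>] 0) (𝓝 x) := by
    have : Tendsto (fun s : ℝ => x - s * (x ^ 2 / 2)) (𝓝 0)
        (𝓝 (x - 0 * (x ^ 2 / 2))) :=
      (by fun_prop : Continuous fun s : ℝ => x - s * (x ^ 2 / 2)).tendsto 0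
    simp only [zero_mul, sub_zero] at this
    exact this.mono_left nhdsWithin_le_nhds
  refine tendsto_of_tendsto_of_tendsto_of_le_of_le' h1 tendsto_const_nhds ?_ ?_
  · filter_upwards [self_mem_nhdsWithin] with s hs
    have hs : 0 < s := hs
    rw [le_div_iff₀ (by positivity)]
    have := exp_neg_le_quadratic (mul_nonneg hs.le hx)
    nlinarith
  · filter_upwards [self_mem_nhdsWithin] with s hs
    have hs : 0 < s := hs
    rw [div_le_iff₀ (by positivity)]
    have := Real.one_sub_le_exp_neg (s * x)
    nlinarith

lemma integral_first {F : Measure ℝ} (hF : IsPD F) {s : ℝ} (hs : 0 ≤ s) :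
    ∫ x, (1 - Real.exp (-(s * x))) ∂F = 1 - LS F s := by
  have := hF.1
  rw [integral_sub (integrable_const _) (integrable_exp hF hs)]
  simp [LS]

lemma integral_second {F : Measure ℝ} (hF : IsPD F) (hi : Integrable (fun x => x) F) {s : ℝ}
    (hs : 0 ≤ s) :
    ∫ x, (Real.exp (-(s * x)) - 1 + s * x) ∂F = LS F s - 1 + s * ∫ x, x ∂F := by
  have := hF.1
  have h1 : Integrable (fun x => Real.exp (-(s * x)) - 1) F :=
    (integrable_exp hF hs).sub (integrable_const _)
  rw [integral_add h1 (hi.const_mul s),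
    integral_sub (integrable_exp hF hs) (integrable_const _), integral_const_mul]
  simp [LS]

lemma integrable_second {F : Measure ℝ} (hF : IsPD F) (hi : Integrable (fun x => x) F) {s : ℝ}
    (hs : 0 ≤ s) : Integrable (fun x => Real.exp (-(s * x)) - 1 + s * x) F := by
  have := hF.1
  exact ((integrable_exp hF hs).sub (integrable_const _)).add (hi.const_mul s)

lemma linear_le_LS {F : Measure ℝ} (hF : IsPD F) (hi : Integrable (fun x => x) F) {s : ℝ}
    (hs : 0 ≤ s) : 1 - (∫ x, x ∂F) * s ≤ LS F s := by
  have h : 0 ≤ ∫ x, (Real.exp (-(s * x)) - 1 + s * x) ∂F :=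
    integral_nonneg fun x => by
      have := Real.one_sub_le_exp_neg (s * x)
      simp only [Pi.zero_apply]; linarith
  rw [integral_second hF hi hs] at h
  linarith

/-- The bounds on the Laplace transform determine the mean and make the second moment finite. -/
lemma Good.moments {μ C : ℝ} {F : Measure ℝ} (h : Good μ C F) :
    ∫ x, x ∂F = μ ∧ Integrable (fun x => x ^ 2) F := by
  obtain ⟨hF, hb⟩ := h
  have := hF.1
  have h1 : Integrable (fun x => x) F ∧ ∫ x, x ∂F ≤ μ := by
    refine fatou_real (G := fun n x => (1 - Real.exp (-(stp n * x))) / stp n) (c := fun _ => μ)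
      ?_ ?_ ?_ ?_ tendsto_const_nhds
    · filter_upwards [hF.ae] with x hx
      exact (tendsto_first_order hx).comp tendsto_stp'
    · exact fun n => ((integrable_const _).sub (integrable_exp hF (stp_pos n).le)).div_const _
    · intro n
      filter_upwards [hF.ae] with x hx
      refine div_nonneg ?_ (stp_pos n).le
      have := mul_nonneg (stp_pos n).le hx
      have : Real.exp (-(stp n * x)) ≤ 1 := Real.exp_le_one_iff.2 (by linarith)
      linarith
    · intro n
      rw [integral_div, integral_first hF (stp_pos n).le, div_le_iff₀ (stp_pos n)]
      have := (hb _ (stp_pos n).le).1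
      linarith
  obtain ⟨hi, hle⟩ := h1
  have hge : μ ≤ ∫ x, x ∂F := by
    have hl : Tendsto (fun n => μ - C * stp n / 2) atTop (𝓝 (μ - C * 0 / 2)) :=
      ((tendsto_stp.const_mul C).div_const 2).const_sub μ
    have := le_of_tendsto' hl (b := ∫ x, x ∂F) fun n => by
      have h2 := linear_le_LS hF hi (stp_pos n).le
      have h3 := (hb _ (stp_pos n).le).2
      have h4 := stp_pos n
      have h5 : (μ - C * stp n / 2) * stp n ≤ (∫ x, x ∂F) * stp n := by nlinarith
      exact le_of_mul_le_mul_right h5 h4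
    simpa using this
  have hμ : ∫ x, x ∂F = μ := le_antisymm hle hge
  refine ⟨hμ, ?_⟩
  have h2 := (fatou_real (P := F) (f := fun x => x ^ 2 / 2)
    (G := fun n x => (Real.exp (-(stp n * x)) - 1 + stp n * x) / stp n ^ 2)
    (c := fun _ => C / 2) ?_ ?_ ?_ ?_ tendsto_const_nhds).1
  · have := h2.const_mul 2
    refine this.congr (Eventually.of_forall fun x => ?_)
    simp only; ring
  · filter_upwards [hF.ae] with x hx
    exact (tendsto_second_order hx).comp tendsto_stp'
  · exact fun n => (integrable_second hF hi (stp_pos n).le).div_const _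
  · refine fun n => Eventually.of_forall fun x => div_nonneg ?_ (by positivity)
    have := Real.one_sub_le_exp_neg (stp n * x)
    linarith
  · intro n
    have := stp_pos n
    rw [integral_div, integral_second hF hi (stp_pos n).le, hμ, div_le_iff₀ (by positivity)]
    have := (hb _ (stp_pos n).le).2
    linarith

lemma integrable_id_of_sq {F : Measure ℝ} [IsProbabilityMeasure F]
    (h : Integrable (fun x => x ^ 2) F) : Integrable (fun x => x) F := by
  refine (h.add (integrable_const 1)).mono' (by fun_prop) (Eventually.of_forall fun x => ?_)
  simp only [Pi.add_apply, Real.norm_eq_abs, abs_le]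
  constructor <;> nlinarith [sq_nonneg (x - 1), sq_nonneg (x + 1)]

lemma Sol.good {FT F : Measure ℝ} {μ : ℝ} (h : Sol FT μ F) : Good μ (∫ x, x ^ 2 ∂F) F := by
  obtain ⟨h1, h2, h3, h4, -⟩ := h
  have hF : IsPD F := ⟨h1, h2⟩
  have hi := integrable_id_of_sq h4
  refine ⟨hF, fun s hs => ⟨?_, ?_⟩⟩
  · rw [← h3]; exact linear_le_LS hF hi hs
  · have h5 : ∫ x, (Real.exp (-(s * x)) - 1 + s * x) ∂F ≤ ∫ x, x ^ 2 * (s ^ 2 / 2) ∂F := by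
      refine integral_mono_ae (integrable_second hF hi hs) (h4.mul_const _) ?_
      filter_upwards [hF.ae] with x hx
      have := exp_neg_le_quadratic (mul_nonneg hs hx)
      nlinarith
    rw [integral_second hF hi hs, integral_mul_const, h3] at h5
    linarith

/-! ### The functional `σ` and its exponential -/

/-- The integrand of `σ`. -/
noncomputable def kern (F : Measure ℝ) (μ s t : ℝ) : ℝ :=
  if t = 0 then μ * s else (1 - LS F (t * s)) / t

lemma measurable_kern {F : Measure ℝ} [SFinite F] (μ s : ℝ) : Measurable (kern F μ s) := by
  refine Measurable.ite (measurableSet_singleton 0) measurable_const ?_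
  have := (measurable_LS F).comp (measurable_id.mul_const s)
  exact (measurable_const.sub this).div measurable_id

lemma kern_nonneg {μ C : ℝ} {F : Measure ℝ} (h : Good μ C F) {s t : ℝ} (hs : 0 ≤ s)
    (ht : 0 ≤ t) (hμ : 0 < μ) : 0 ≤ kern F μ s t := by
  unfold kern
  split_ifs
  · positivity
  · have := LS_le_one h.1 (mul_nonneg ht hs)
    exact div_nonneg (by linarith) ht

lemma kern_le {μ C : ℝ} {F : Measure ℝ} (h : Good μ C F) {s t : ℝ} (hs : 0 ≤ s)
    (ht : 0 ≤ t) : kern F μ s t ≤ μ * s := by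
  unfold kern
  split_ifs with h0
  · exact le_rfl
  · have ht : 0 < t := lt_of_le_of_ne ht (Ne.symm h0)
    rw [div_le_iff₀ ht]
    have := (h.2 _ (mul_nonneg ht.le hs)).1
    linarith

lemma le_kern {μ C : ℝ} {F : Measure ℝ} (h : Good μ C F) {s t : ℝ} (hs : 0 ≤ s)
    (ht : 0 ≤ t) (hC : 0 ≤ C) : μ * s - t * (C * s ^ 2 / 2) ≤ kern F μ s t := by
  unfold kern
  split_ifs with h0
  · have : 0 ≤ t * (C * s ^ 2 / 2) := by positivity
    linarith
  · have ht : 0 < t := lt_of_le_of_ne ht (Ne.symm h0)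
    rw [le_div_iff₀ ht]
    have := (h.2 _ (mul_nonneg ht.le hs)).2
    linarith

lemma integrable_kern {μ C : ℝ} {F FT : Measure ℝ} [IsProbabilityMeasure FT]
    (hT : FT (Set.Iio 0) = 0) (hμ : 0 < μ) (h : Good μ C F) {s : ℝ} (hs : 0 ≤ s) :
    Integrable (kern F μ s) FT := by
  have := h.1.1
  refine Integrable.of_bound (measurable_kern μ s).aestronglyMeasurable (C := μ * s) ?_
  filter_upwards [ae_nonneg_of_Iio hT] with t ht
  rw [Real.norm_of_nonneg (kern_nonneg h hs ht hμ)]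
  exact kern_le h hs ht

lemma sigma_nonneg {μ C : ℝ} {F FT : Measure ℝ}
    (hT : FT (Set.Iio 0) = 0) (hμ : 0 < μ) (h : Good μ C F) {s : ℝ} (hs : 0 ≤ s) :
    0 ≤ sigmaT F FT μ s := by
  refine integral_nonneg_of_ae ?_
  filter_upwards [ae_nonneg_of_Iio hT] with t ht
  exact kern_nonneg h hs ht hμ

lemma sigma_le {μ C : ℝ} {F FT : Measure ℝ} [IsProbabilityMeasure FT]
    (hT : FT (Set.Iio 0) = 0) (hμ : 0 < μ) (h : Good μ C F) {s : ℝ} (hs : 0 ≤ s) :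
    sigmaT F FT μ s ≤ μ * s := by
  calc sigmaT F FT μ s ≤ ∫ _, μ * s ∂FT := by
        refine integral_mono_ae (integrable_kern hT hμ h hs) (integrable_const _) ?_
        filter_upwards [ae_nonneg_of_Iio hT] with t ht
        exact kern_le h hs ht
    _ = μ * s := by simp

lemma le_sigma {μ C : ℝ} {F FT : Measure ℝ} [IsProbabilityMeasure FT]
    (hT : FT (Set.Iio 0) = 0) (hμ : 0 < μ) (h : Good μ C F) {s : ℝ} (hs : 0 ≤ s)
    (hC : 0 ≤ C) (hi : Integrable (fun t => t) FT) :
    μ * s - (∫ t, t ∂FT) * (C * s ^ 2 / 2) ≤ sigmaT F FT μ s := by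
  calc μ * s - (∫ t, t ∂FT) * (C * s ^ 2 / 2)
      = ∫ t, (μ * s - t * (C * s ^ 2 / 2)) ∂FT := by
        rw [integral_sub (integrable_const _) (hi.mul_const _), integral_mul_const _ (fun t => t)]; simp
    _ ≤ sigmaT F FT μ s := by
        refine integral_mono_ae ((integrable_const _).sub (hi.mul_const _))
          (integrable_kern hT hμ h hs) ?_
        filter_upwards [ae_nonneg_of_Iio hT] with t ht
        exact le_kern h hs ht hC

/-- If `τ ≥ 0` and `0 ≤ w ≤ 1`, the mixture over `t ∼ FT` of the laws
`(1 - w t) δ₀ + w t · Law(τ t X)`, `X ∼ F`, is a probability distribution on `[0,∞)`. -/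
lemma exists_LS_mixture {F FT : Measure ℝ} [IsProbabilityMeasure FT] (hF : IsPD F)
    {w τ : ℝ → ℝ} (hw : Measurable w) (hτ : Measurable τ) (hw0 : ∀ t, 0 ≤ w t)
    (hw1 : ∀ t, w t ≤ 1) (hτ0 : ∀ t, 0 ≤ τ t) :
    ∃ G, IsPD G ∧ ∀ s, 0 ≤ s → LS G s = ∫ t, (1 - w t * (1 - LS F (τ t * s))) ∂FT := by
  have := hF.1
  let A : Measure ℝ := ((FT.prod F).withDensity fun p => (Real.toNNReal (w p.1) : ℝ≥0∞)).map
    fun p => τ p.1 * p.2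
  let B : Measure ℝ := (FT.withDensity fun t => (Real.toNNReal (1 - w t) : ℝ≥0∞)).map fun _ => 0
  have hwi : Integrable w FT := Integrable.of_bound hw.aestronglyMeasurable (C := 1)
    (Eventually.of_forall fun t => by rw [Real.norm_of_nonneg (hw0 t)]; exact hw1 t)
  have hwm : Measurable fun p : ℝ × ℝ => Real.toNNReal (w p.1) := by fun_prop
  have hwm' : Measurable fun t => Real.toNNReal (1 - w t) := by fun_prop
  have hgm : Measurable fun p : ℝ × ℝ => τ p.1 * p.2 := by fun_prop
  have hAu : A Set.univ = ∫⁻ t, ENNReal.ofReal (w t) ∂FT := by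
    simp only [A]
    rw [Measure.map_apply hgm .univ, Set.preimage_univ, withDensity_apply _ .univ,
      Measure.restrict_univ, lintegral_prod _ (by fun_prop)]
    simp [ENNReal.ofReal]
  have hBu : B Set.univ = ∫⁻ t, ENNReal.ofReal (1 - w t) ∂FT := by
    simp only [B]
    rw [Measure.map_apply measurable_const .univ, Set.preimage_univ, withDensity_apply _ .univ,
      Measure.restrict_univ]
    simp [ENNReal.ofReal]
  have hG1 : IsProbabilityMeasure (A + B) := by
    constructor
    rw [Measure.add_apply, hAu, hBu, ← lintegral_add_left (by fun_prop)]
    have : ∀ t, ENNReal.ofReal (w t) + ENNReal.ofReal (1 - w t) = 1 := fun t => by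
      rw [← ENNReal.ofReal_add (hw0 t) (by linarith [hw1 t])]; simp
    simp [this]
  have hpos : ∀ᵐ x ∂(A + B), 0 ≤ x := by
    rw [ae_add_measure_iff]
    constructor
    · simp only [A]
      rw [ae_map_iff (by fun_prop) (measurableSet_le (by fun_prop) (by fun_prop))]
      refine (withDensity_absolutelyContinuous _ _).ae_le ?_
      have h2 : ∀ᵐ p ∂(FT.prod F), 0 ≤ p.2 := Measure.quasiMeasurePreserving_snd.ae hF.ae
      filter_upwards [h2] with p hp using mul_nonneg (hτ0 _) hp
    · simp only [B]
      rw [ae_map_iff (by fun_prop) (measurableSet_le (by fun_prop) (by fun_prop))]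
      simp
  have hPD : IsPD (A + B) := ⟨hG1, Iio_of_ae_nonneg hpos⟩
  refine ⟨A + B, hPD, fun s hs => ?_⟩
  have hint := integrable_exp hPD hs
  have hA : ∫ x, Real.exp (-(s * x)) ∂A = ∫ t, w t * LS F (τ t * s) ∂FT := by
    have hAi : Integrable (fun x => Real.exp (-(s * x))) A := hint.left_of_add_measure
    simp only [A] at hAi ⊢
    rw [integrable_map_measure (by fun_prop) (by fun_prop),
      integrable_withDensity_iff_integrable_smul hwm] at hAi
    rw [integral_map (by fun_prop) (by fun_prop),
      integral_withDensity_eq_integral_smul hwm]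
    refine (integral_prod _ hAi).trans ?_
    refine integral_congr_ae (Eventually.of_forall fun t => ?_)
    simp only [Function.comp_apply, NNReal.smul_def, Real.coe_toNNReal _ (hw0 t), smul_eq_mul,
      integral_const_mul, LS]
    congr 2
    ext x
    congr 1
    ring
  have hB : ∫ x, Real.exp (-(s * x)) ∂B = ∫ t, (1 - w t) ∂FT := by
    simp only [B]
    rw [integral_map (by fun_prop) (by fun_prop),
      integral_withDensity_eq_integral_smul hwm']
    refine integral_congr_ae (Eventually.of_forall fun t => ?_)
    have : 0 ≤ 1 - w t := by linarith [hw1 t]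
    simp [NNReal.smul_def, Real.coe_toNNReal _ this]
  have hmL : Measurable fun t => w t * LS F (τ t * s) :=
    hw.mul ((measurable_LS F).comp (hτ.mul_const s))
  have hiL : Integrable (fun t => w t * LS F (τ t * s)) FT := by
    refine Integrable.of_bound hmL.aestronglyMeasurable (C := 1)
      (Eventually.of_forall fun t => ?_)
    have h1 := LS_nonneg F (τ t * s)
    have h2 := LS_le_one hF (mul_nonneg (hτ0 t) hs)
    rw [Real.norm_of_nonneg (mul_nonneg (hw0 t) h1)]
    nlinarith [hw0 t, hw1 t]
  have hiw : Integrable (fun t => 1 - w t) FT := (integrable_const _).sub hwi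
  rw [LS, integral_add_measure hint.left_of_add_measure hint.right_of_add_measure, hA, hB,
    ← integral_add hiL hiw]
  refine integral_congr_ae (Eventually.of_forall fun t => ?_)
  simp only
  ring

/-- `exp(-σ)` is again a Laplace transform, being the limit of `(1 - σₙ / n)ⁿ`, where `σₙ` is `σ`
with `t` replaced by `max t (1 / n)` in the integrand; each `1 - σₙ / n` is the transform of a
mixture with weights `1 / (n max t (1 / n)) ≤ 1`. -/
lemma exists_step {μ C : ℝ} {F FT : Measure ℝ} [IsProbabilityMeasure FT]
    (hT : FT (Set.Iio 0) = 0) (hμ : 0 < μ) (h : Good μ C F) :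
    ∃ G, IsPD G ∧ ∀ s, 0 ≤ s → LS G s = Real.exp (-(sigmaT F FT μ s)) := by
  have hF := h.1
  have := hF.1
  let τ : ℕ → ℝ → ℝ := fun n t => max t (1 / ((n : ℝ) + 1))
  have hn0 : ∀ n : ℕ, (0 : ℝ) < 1 / ((n : ℝ) + 1) := fun n => by positivity
  have hτ0 : ∀ n t, 0 < τ n t := fun n t => lt_max_of_lt_right (hn0 n)
  have hτm : ∀ n, Measurable (τ n) := fun n => by simp only [τ]; fun_prop
  let w : ℕ → ℝ → ℝ := fun n t => 1 / (((n : ℝ) + 1) * τ n t)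
  have hw0 : ∀ n t, 0 ≤ w n t := fun n t => by have := hτ0 n t; simp only [w]; positivity
  have hw1 : ∀ n t, w n t ≤ 1 := fun n t => by
    have := hτ0 n t
    simp only [w]
    rw [div_le_one (by positivity)]
    have h1 : 1 / ((n : ℝ) + 1) ≤ τ n t := le_max_right _ _
    rwa [div_le_iff₀ (by positivity), mul_comm] at h1
  let S : ℕ → ℝ → ℝ := fun n s => ∫ t, kern F μ s (τ n t) ∂FT
  have hki : ∀ n s, 0 ≤ s → Integrable (fun t => kern F μ s (τ n t)) FT := fun n s hs => by
    refine Integrable.of_bound ((measurable_kern μ s).comp (hτm n)).aestronglyMeasurable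
      (C := μ * s) (Eventually.of_forall fun t => ?_)
    rw [Real.norm_of_nonneg (kern_nonneg h hs (hτ0 n t).le hμ)]
    exact kern_le h hs (hτ0 n t).le
  have hS : ∀ n s, 0 ≤ s → S n s ≤ μ * s := fun n s hs => by
    calc S n s ≤ ∫ _, μ * s ∂FT :=
          integral_mono (hki n s hs) (integrable_const _) fun t => kern_le h hs (hτ0 n t).le
      _ = μ * s := by simp
  have hmix : ∀ n, ∃ G, IsPD G ∧ ∀ s, 0 ≤ s → LS G s = 1 - S n s / ((n : ℝ) + 1) := fun n => by
    obtain ⟨G, hG, hGs⟩ := exists_LS_mixture (FT := FT) hF (w := w n) (τ := τ n)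
      (by have := hτm n; simp only [w]; fun_prop) (hτm n) (hw0 n) (hw1 n) fun t => (hτ0 n t).le
    refine ⟨G, hG, fun s hs => ?_⟩
    have : ∫ t, (1 - kern F μ s (τ n t) / ((n : ℝ) + 1)) ∂FT = 1 - S n s / ((n : ℝ) + 1) := by
      rw [integral_sub (integrable_const _) ((hki n s hs).div_const _), integral_div]
      simp [S]
    rw [hGs s hs, ← this]
    refine integral_congr_ae (Eventually.of_forall fun t => ?_)
    have h0 := (hτ0 n t).ne'
    simp only [kern, h0, if_false, w]
    field_simp
  choose G hG hGs using hmix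
  choose H hH hHs using fun n => exists_LS_pow (hG n) (n + 1)
  refine exists_LS_of_tendsto (μ := μ) hH (fun n s hs => ?_) (fun s hs => ?_)
  · rw [hHs n s hs]
    have h0 := LS_nonneg (G n) s
    have h1 := one_add_mul_le_pow (a := LS (G n) s - 1) (by linarith) (n + 1)
    simp only [add_sub_cancel] at h1
    refine le_trans ?_ h1
    rw [hGs n s hs]
    have := hS n s hs
    push_cast
    have hn : ((n : ℝ) + 1) ≠ 0 := by positivity
    have : 1 + ((n : ℝ) + 1) * (1 - S n s / ((n : ℝ) + 1) - 1) = 1 - S n s := by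
      field_simp; ring
    linarith
  · have hSlim : Tendsto (fun n => S n s) atTop (𝓝 (sigmaT F FT μ s)) := by
      refine tendsto_integral_of_dominated_convergence (fun _ => μ * s)
        (fun n => (hki n s hs).1) (integrable_const _) (fun n => Eventually.of_forall fun t => ?_) ?_
      · rw [Real.norm_of_nonneg (kern_nonneg h hs (hτ0 n t).le hμ)]
        exact kern_le h hs (hτ0 n t).le
      · filter_upwards [ae_nonneg_of_Iio hT] with t ht
        change Tendsto _ _ (𝓝 (kern F μ s t))
        rcases ht.eq_or_lt with h0 | h0
        · subst h0
          have hC : 0 ≤ C := by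
            have h1 := h.2 1 zero_le_one
            linarith
          have hk0 : kern F μ s 0 = μ * s := by simp [kern]
          rw [hk0]
          have hτz : ∀ n, τ n 0 = 1 / ((n : ℝ) + 1) := fun n => max_eq_right (hn0 n).le
          have hl : Tendsto (fun n : ℕ => μ * s - 1 / ((n : ℝ) + 1) * (C * s ^ 2 / 2)) atTop
              (𝓝 (μ * s - 0 * (C * s ^ 2 / 2))) :=
            (tendsto_one_div_add_atTop_nhds_zero_nat.mul_const _).const_sub _
          rw [zero_mul, sub_zero] at hl
          refine tendsto_of_tendsto_of_tendsto_of_le_of_le hl tendsto_const_nhds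
            (fun n => ?_) (fun n => kern_le h hs (hτ0 n 0).le)
          have := le_kern h hs (hτ0 n 0).le hC
          simp only [hτz] at this ⊢
          exact this
        · refine tendsto_const_nhds.congr' ?_
          have := (tendsto_one_div_add_atTop_nhds_zero_nat (𝕜 := ℝ)).eventually
            (eventually_lt_nhds h0)
          filter_upwards [this] with n hn
          rw [show τ n t = t from max_eq_left hn.le]
    -- `(1 + g n) ^ n → e^{-σ}` for `g n = - S (n - 1) s / n`, shifted by one index
    let g : ℕ → ℝ := fun n => -(S (n - 1) s) / n
    have hg : Tendsto (fun n : ℕ => (n : ℝ) * g n) atTop (𝓝 (-(sigmaT F FT μ s))) := by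
      rw [← tendsto_add_atTop_iff_nat 1]
      refine hSlim.neg.congr fun n => ?_
      have hn : ((n : ℝ) + 1) ≠ 0 := by positivity
      simp only [g, Nat.add_sub_cancel, Nat.cast_add, Nat.cast_one]
      field_simp
    have := (tendsto_add_atTop_iff_nat 1).2 (Real.tendsto_one_add_pow_exp_of_tendsto hg)
    refine this.congr fun n => ?_
    rw [hHs n s hs, hGs n s hs]
    simp only [g, Nat.add_sub_cancel, Nat.cast_add, Nat.cast_one]
    ring

/-! ### Second moment of a solution -/

lemma integrable_id_iff_lintegral {FT : Measure ℝ} (hT : FT (Set.Iio 0) = 0) :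
    Integrable (fun t => t) FT ↔ ∫⁻ t, ENNReal.ofReal t ∂FT < ⊤ := by
  rw [← hasFiniteIntegral_iff_ofReal (ae_nonneg_of_Iio hT)]
  exact ⟨fun h => h.2, fun h => ⟨by fun_prop, h⟩⟩

lemma lintegral_lt_one_iff {FT : Measure ℝ} (hT : FT (Set.Iio 0) = 0) :
    ∫⁻ t, ENNReal.ofReal t ∂FT < 1 ↔ Integrable (fun t => t) FT ∧ ∫ t, t ∂FT < 1 := by
  constructor
  · intro h
    have hi := (integrable_id_iff_lintegral hT).2 (h.trans ENNReal.one_lt_top)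
    refine ⟨hi, ?_⟩
    rw [← ofReal_integral_eq_lintegral_ofReal hi (ae_nonneg_of_Iio hT)] at h
    simpa using h
  · rintro ⟨hi, h⟩
    rw [← ofReal_integral_eq_lintegral_ofReal hi (ae_nonneg_of_Iio hT)]
    simpa using h

lemma tendsto_LS_second {F : Measure ℝ} (hF : IsPD F) (h2 : Integrable (fun x => x ^ 2) F) :
    Tendsto (fun s => (LS F s - 1 + s * ∫ x, x ∂F) / s ^ 2) (𝓝[>] 0)
      (𝓝 ((∫ x, x ^ 2 ∂F) / 2)) := by
  have := hF.1
  have hi := integrable_id_of_sq h2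
  have h1 : Tendsto (fun s => ∫ x, (Real.exp (-(s * x)) - 1 + s * x) / s ^ 2 ∂F) (𝓝[>] 0)
      (𝓝 (∫ x, x ^ 2 / 2 ∂F)) := by
    refine tendsto_integral_filter_of_dominated_convergence (fun x => x ^ 2 / 2) ?_ ?_
      (h2.div_const 2) ?_
    · exact Eventually.of_forall fun s => by fun_prop
    · filter_upwards [self_mem_nhdsWithin] with s hs
      have hs : 0 < s := hs
      filter_upwards [hF.ae] with x hx
      have ha := exp_neg_le_quadratic (mul_nonneg hs.le hx)
      have hb := Real.one_sub_le_exp_neg (s * x)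
      rw [Real.norm_of_nonneg (div_nonneg (by linarith) (by positivity)),
        div_le_iff₀ (by positivity)]
      nlinarith
    · filter_upwards [hF.ae] with x hx using tendsto_second_order hx
  rw [integral_div] at h1
  refine h1.congr' ?_
  filter_upwards [self_mem_nhdsWithin] with s hs
  rw [integral_div, integral_second hF hi (le_of_lt hs)]

/-- Comparing the second-order expansions at `0` of both sides of `F̂ = exp(-σ)` gives
`m₂ - μ² = E[T] m₂`, where `m₂` is the second moment of `F`. -/
lemma Sol.second_moment {μ : ℝ} {F FT : Measure ℝ} [IsProbabilityMeasure FT]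
    (hT : FT (Set.Iio 0) = 0) (hμ : 0 < μ) (h : Sol FT μ F) :
    Integrable (fun t => t) FT ∧
      (∫ x, x ^ 2 ∂F) - μ ^ 2 = (∫ t, t ∂FT) * ∫ x, x ^ 2 ∂F := by
  have hg := h.good
  have hF := hg.1
  have := hF.1
  have hm := h.2.2.1
  have h2 := h.2.2.2.1
  have heq := h.2.2.2.2
  have hψ := tendsto_LS_second hF h2
  rw [hm] at hψ
  set m := ∫ x, x ^ 2 ∂F with hmdef
  have hm0 : 0 ≤ m := integral_nonneg fun x => sq_nonneg x
  -- `q n = (μ s - σ(s)) / s²` along `s = stp n`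
  let q : ℕ → ℝ := fun n => (μ * stp n - sigmaT F FT μ (stp n)) / stp n ^ 2
  have hσlow : ∀ n, μ * stp n - m * stp n ^ 2 / 2 ≤ sigmaT F FT μ (stp n) := fun n => by
    have h1 := (hg.2 _ (stp_pos n).le).2
    have h3 := heq _ (stp_pos n).le
    have h4 := Real.one_sub_le_exp_neg (sigmaT F FT μ (stp n))
    linarith
  let a : ℕ → ℝ := fun n => sigmaT F FT μ (stp n) / stp n
  have ha : Tendsto a atTop (𝓝 μ) := by
    have hl : Tendsto (fun n => μ - m * stp n / 2) atTop (𝓝 (μ - m * 0 / 2)) :=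
      ((tendsto_stp.const_mul m).div_const 2).const_sub μ
    rw [mul_zero, zero_div, sub_zero] at hl
    refine tendsto_of_tendsto_of_tendsto_of_le_of_le hl tendsto_const_nhds (fun n => ?_)
      (fun n => ?_)
    · simp only [a]
      rw [le_div_iff₀ (stp_pos n)]
      have := hσlow n
      nlinarith
    · simp only [a]
      rw [div_le_iff₀ (stp_pos n)]
      exact sigma_le hT hμ hg (stp_pos n).le
  have hr : Tendsto (fun n => (Real.exp (-(sigmaT F FT μ (stp n))) - 1 + sigmaT F FT μ (stp n))
      / stp n ^ 2) atTop (𝓝 (μ ^ 2 / 2)) := by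
    have hu : Tendsto (fun n => a n ^ 2 / 2) atTop (𝓝 (μ ^ 2 / 2)) := (ha.pow 2).div_const 2
    have hl : Tendsto (fun n => a n ^ 2 / 2 - a n ^ 3 / 6 * stp n) atTop
        (𝓝 (μ ^ 2 / 2 - μ ^ 3 / 6 * 0)) := hu.sub (((ha.pow 3).div_const 6).mul tendsto_stp)
    rw [mul_zero, sub_zero] at hl
    have has : ∀ n, sigmaT F FT μ (stp n) = a n * stp n := fun n => by
      simp only [a]; rw [div_mul_cancel₀ _ (stp_pos n).ne']
    refine tendsto_of_tendsto_of_tendsto_of_le_of_le hl hu (fun n => ?_) (fun n => ?_)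
    · have := cubic_le_exp_neg (sigma_nonneg hT hμ hg (stp_pos n).le)
      have hp := stp_pos n
      rw [le_div_iff₀ (by positivity)]
      rw [has n] at this ⊢
      nlinarith
    · have := exp_neg_le_quadratic (sigma_nonneg hT hμ hg (stp_pos n).le)
      have hp := stp_pos n
      rw [div_le_iff₀ (by positivity)]
      rw [has n] at this ⊢
      nlinarith
  have hq : Tendsto q atTop (𝓝 (m / 2 - μ ^ 2 / 2)) := by
    refine ((hψ.comp tendsto_stp').sub hr).congr fun n => ?_
    simp only [Function.comp_apply, q]
    rw [heq _ (stp_pos n).le, ← sub_div]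
    congr 1
    ring
  have hfat : Integrable (fun t => t * (m / 2)) FT ∧
      ∫ t, t * (m / 2) ∂FT ≤ m / 2 - μ ^ 2 / 2 := by
    refine fatou_real (G := fun n t => (μ * stp n - kern F μ (stp n) t) / stp n ^ 2) (c := q)
      ?_ ?_ ?_ ?_ hq
    · filter_upwards [ae_nonneg_of_Iio hT] with t ht
      rcases ht.eq_or_lt with h0 | h0
      · subst h0
        simp [kern]
      · have hts : Tendsto (fun n => t * stp n) atTop (𝓝[>] 0) := by
          refine tendsto_nhdsWithin_iff.2 ⟨?_, Eventually.of_forall fun n =>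
            mul_pos h0 (stp_pos n)⟩
          simpa using tendsto_stp.const_mul t
        refine ((hψ.comp hts).const_mul t).congr fun n => ?_
        have hp := (stp_pos n).ne'
        simp only [Function.comp_apply, kern, h0.ne', if_false]
        field_simp
        ring
    · exact fun n => ((integrable_const _).sub (integrable_kern hT hμ hg (stp_pos n).le)).div_const _
    · intro n
      filter_upwards [ae_nonneg_of_Iio hT] with t ht
      have := kern_le hg (stp_pos n).le ht
      exact div_nonneg (by linarith) (sq_nonneg _)
    · intro n
      rw [integral_div, integral_sub (integrable_const _) (integrable_kern hT hμ hg (stp_pos n).le)]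
      simp [q, sigmaT, kern]
  have hge : 0 ≤ ∫ t, t * (m / 2) ∂FT := by
    refine integral_nonneg_of_ae ?_
    filter_upwards [ae_nonneg_of_Iio hT] with t ht using mul_nonneg ht (by linarith)
  have hmpos : 0 < m := by
    have := pow_pos hμ 2
    linarith [hfat.2]
  have hTi : Integrable (fun t => t) FT := by
    refine (hfat.1.mul_const (2 / m)).congr (Eventually.of_forall fun t => ?_)
    simp only
    field_simp
  refine ⟨hTi, ?_⟩
  have hup : m / 2 - μ ^ 2 / 2 ≤ (∫ t, t ∂FT) * (m / 2) := by
    refine le_of_tendsto' hq fun n => ?_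
    have hp := stp_pos n
    simp only [q]
    rw [div_le_iff₀ (by positivity)]
    have := le_sigma hT hμ hg hp.le hm0 hTi
    linarith
  have hlo := hfat.2
  rw [integral_mul_const] at hlo
  linarith

/-- Since `m₂ (1 - E[T]) = μ² > 0`, a solution forces `E[T] < 1`. -/
lemma Sol.mean_lt_one {μ : ℝ} {F FT : Measure ℝ} [IsProbabilityMeasure FT]
    (hT : FT (Set.Iio 0) = 0) (hμ : 0 < μ) (h : Sol FT μ F) :
    Integrable (fun t => t) FT ∧ ∫ t, t ∂FT < 1 := by
  obtain ⟨hi, h2⟩ := h.second_moment hT hμ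
  refine ⟨hi, ?_⟩
  have hm0 : 0 ≤ ∫ x, x ^ 2 ∂F := integral_nonneg fun x => sq_nonneg x
  have := pow_pos hμ 2
  by_contra! hc
  nlinarith

/-! ### Uniqueness -/

lemma abs_exp_neg_sub_le {a b : ℝ} (ha : 0 ≤ a) (hb : 0 ≤ b) :
    |Real.exp (-a) - Real.exp (-b)| ≤ |a - b| := by
  have key : ∀ {a b : ℝ}, 0 ≤ a → a ≤ b → Real.exp (-a) - Real.exp (-b) ≤ b - a := by
    intro a b ha hab
    have h1 : Real.exp (-b) = Real.exp (-a) * Real.exp (-(b - a)) := by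
      rw [← Real.exp_add]; ring_nf
    have h2 := Real.one_sub_le_exp_neg (b - a)
    have h3 : Real.exp (-a) ≤ 1 := Real.exp_le_one_iff.2 (by linarith)
    have h4 := Real.exp_pos (-a)
    rw [h1]
    nlinarith
  rcases le_total a b with hab | hab
  · rw [abs_of_nonneg (by have := Real.exp_le_exp.2 (neg_le_neg hab); linarith), abs_sub_comm,
      abs_of_nonneg (by linarith)]
    exact key ha hab
  · rw [abs_sub_comm, abs_of_nonneg (by have := Real.exp_le_exp.2 (neg_le_neg hab); linarith),
      abs_of_nonneg (by linarith)]
    exact key hb hab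

/-- The map `F̂ ↦ exp(-σ)` contracts `sup_s |F̂(s) - Ĝ(s)| / s²` by the factor `E[T]`. -/
lemma contraction {μ C C' K : ℝ} {F G FT : Measure ℝ} [IsProbabilityMeasure FT]
    (hT : FT (Set.Iio 0) = 0) (hμ : 0 < μ) (hi : Integrable (fun t => t) FT)
    (hF : Good μ C F) (hG : Good μ C' G)
    (hK : ∀ s, 0 ≤ s → |LS F s - LS G s| ≤ K * s ^ 2) {s : ℝ} (hs : 0 ≤ s) :
    |Real.exp (-(sigmaT F FT μ s)) - Real.exp (-(sigmaT G FT μ s))| ≤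
      (∫ t, t ∂FT) * K * s ^ 2 := by
  refine (abs_exp_neg_sub_le (sigma_nonneg hT hμ hF hs) (sigma_nonneg hT hμ hG hs)).trans ?_
  have hd : sigmaT F FT μ s - sigmaT G FT μ s = ∫ t, (kern F μ s t - kern G μ s t) ∂FT :=
    (integral_sub (integrable_kern hT hμ hF hs) (integrable_kern hT hμ hG hs)).symm
  rw [hd, mul_assoc, ← integral_mul_const, ← Real.norm_eq_abs]
  refine norm_integral_le_of_norm_le (hi.mul_const _) ?_
  filter_upwards [ae_nonneg_of_Iio hT] with t ht
  rcases ht.eq_or_lt with h0 | h0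
  · subst h0; simp [kern]
  · simp only [kern, h0.ne', if_false]
    rw [← sub_div, norm_div, Real.norm_of_nonneg ht, div_le_iff₀ h0, Real.norm_eq_abs,
      abs_sub_comm]
    have := hK _ (mul_nonneg ht hs)
    have h1 : 1 - LS G (t * s) - (1 - LS F (t * s)) = LS F (t * s) - LS G (t * s) := by ring
    rw [h1]
    refine this.trans (le_of_eq ?_)
    ring

lemma Sol.unique {μ : ℝ} {F G FT : Measure ℝ} [IsProbabilityMeasure FT]
    (hT : FT (Set.Iio 0) = 0) (hμ : 0 < μ) (hF : Sol FT μ F) (hG : Sol FT μ G) : F = G := by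
  obtain ⟨hi, hlt⟩ := hF.mean_lt_one hT hμ
  have hE0 : 0 ≤ ∫ t, t ∂FT := integral_nonneg_of_ae (ae_nonneg_of_Iio hT)
  have gF := hF.good
  have gG := hG.good
  refine ext_LS gF.1 gG.1 fun s hs => ?_
  set K : ℝ := (∫ x, x ^ 2 ∂F) / 2 + (∫ x, x ^ 2 ∂G) / 2 with hKdef
  have hiter : ∀ n : ℕ, ∀ s, 0 ≤ s →
      |LS F s - LS G s| ≤ (∫ t, t ∂FT) ^ n * K * s ^ 2 := by
    intro n
    induction n with
    | zero =>
      intro s hs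
      have h1 := gF.2 s hs
      have h2 := gG.2 s hs
      have h3 : 0 ≤ ∫ x, x ^ 2 ∂F := integral_nonneg fun x => sq_nonneg x
      have h4 : 0 ≤ ∫ x, x ^ 2 ∂G := integral_nonneg fun x => sq_nonneg x
      have h5 := mul_nonneg h3 (sq_nonneg s)
      have h6 := mul_nonneg h4 (sq_nonneg s)
      rw [abs_le, hKdef]
      constructor <;> nlinarith
    | succ n ih =>
      intro s hs
      rw [hF.2.2.2.2 s hs, hG.2.2.2.2 s hs]
      refine (contraction hT hμ hi gF gG ih hs).trans (le_of_eq ?_)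
      ring
  have hlim : Tendsto (fun n : ℕ => (∫ t, t ∂FT) ^ n * K * s ^ 2) atTop (𝓝 (0 * K * s ^ 2)) :=
    ((tendsto_pow_atTop_nhds_zero_of_lt_one hE0 hlt).mul_const _).mul_const _
  have := ge_of_tendsto' hlim fun n => hiter n s hs
  rw [zero_mul, zero_mul] at this
  exact sub_eq_zero.1 (abs_nonpos_iff.1 this)

/-! ### Existence -/

/-- With `C = μ² / (1 - E[T])`, the bounds in `Good μ C` are preserved by the iteration. -/
lemma exists_good_step {μ : ℝ} {F FT : Measure ℝ} [IsProbabilityMeasure FT]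
    (hT : FT (Set.Iio 0) = 0) (hμ : 0 < μ) (hi : Integrable (fun t => t) FT)
    (hlt : ∫ t, t ∂FT < 1) (h : Good μ (μ ^ 2 / (1 - ∫ t, t ∂FT)) F) :
    ∃ G, Good μ (μ ^ 2 / (1 - ∫ t, t ∂FT)) G ∧
      ∀ s, 0 ≤ s → LS G s = Real.exp (-(sigmaT F FT μ s)) := by
  obtain ⟨G, hG, hs⟩ := exists_step hT hμ h
  refine ⟨G, ⟨hG, fun s h0 => ?_⟩, hs⟩
  have hE : 0 < 1 - ∫ t, t ∂FT := by linarith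
  set C := μ ^ 2 / (1 - ∫ t, t ∂FT) with hC
  have hCeq : C = (∫ t, t ∂FT) * C + μ ^ 2 := by
    have : C * (1 - ∫ t, t ∂FT) = μ ^ 2 := by rw [hC]; field_simp
    linarith
  have hC0 : 0 ≤ C := by positivity
  have h1 := sigma_le hT hμ h h0
  have h2 := le_sigma hT hμ h h0 hC0 hi
  have h3 := sigma_nonneg hT hμ h h0
  rw [hs s h0]
  constructor
  · have := Real.one_sub_le_exp_neg (sigmaT F FT μ s)
    linarith
  · have h4 := exp_neg_le_quadratic h3
    have h5 : sigmaT F FT μ s ^ 2 ≤ (μ * s) ^ 2 := pow_le_pow_left₀ h3 h1 2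
    have h6 : C * s ^ 2 = (∫ t, t ∂FT) * C * s ^ 2 + μ ^ 2 * s ^ 2 := by
      rw [← add_mul, ← hCeq]
    nlinarith

/-- The degenerate law at `μ`, whose transform is the smallest one with mean `μ`. -/
lemma good_dirac {μ C : ℝ} (hμ : 0 < μ) (hC : μ ^ 2 ≤ C) : Good μ C (Measure.dirac μ) := by
  refine ⟨⟨inferInstance, by simp [hμ.le]⟩, fun s hs => ?_⟩
  have h1 : LS (Measure.dirac μ) s = Real.exp (-(μ * s)) := by simp [LS, mul_comm]
  rw [h1]
  refine ⟨Real.one_sub_le_exp_neg _, ?_⟩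
  have := exp_neg_le_quadratic (mul_nonneg hμ.le hs)
  have := mul_le_mul_of_nonneg_right hC (sq_nonneg s)
  nlinarith

lemma exp_sigma_mono {μ C C' : ℝ} {F G FT : Measure ℝ} [IsProbabilityMeasure FT]
    (hT : FT (Set.Iio 0) = 0) (hμ : 0 < μ) (hF : Good μ C F) (hG : Good μ C' G)
    (hle : ∀ s, 0 ≤ s → LS F s ≤ LS G s) {s : ℝ} (hs : 0 ≤ s) :
    Real.exp (-(sigmaT F FT μ s)) ≤ Real.exp (-(sigmaT G FT μ s)) := by
  refine Real.exp_le_exp.2 (neg_le_neg ?_)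
  refine integral_mono_ae (integrable_kern hT hμ hG hs) (integrable_kern hT hμ hF hs) ?_
  filter_upwards [ae_nonneg_of_Iio hT] with t ht
  split_ifs
  · exact le_rfl
  · have := hle _ (mul_nonneg ht hs)
    exact div_le_div_of_nonneg_right (by linarith) ht

/-- A solution exists when `E[T] < 1`: the iterates started at `δ_μ` have increasing Laplace
transforms, and their limit is a fixed point. -/
lemma exists_sol {μ : ℝ} {FT : Measure ℝ} [IsProbabilityMeasure FT]
    (hT : FT (Set.Iio 0) = 0) (hμ : 0 < μ) (hi : Integrable (fun t => t) FT)
    (hlt : ∫ t, t ∂FT < 1) : ∃ F, Sol FT μ F := by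
  have hE0 : 0 ≤ ∫ t, t ∂FT := integral_nonneg_of_ae (ae_nonneg_of_Iio hT)
  have hE : 0 < 1 - ∫ t, t ∂FT := by linarith
  set C := μ ^ 2 / (1 - ∫ t, t ∂FT) with hC
  have hμC : μ ^ 2 ≤ C := by
    rw [hC, le_div_iff₀ hE]
    nlinarith [sq_nonneg μ]
  choose Φ hΦg hΦ using fun F : {F : Measure ℝ // Good μ C F} =>
    exists_good_step hT hμ hi hlt F.2
  let f : ℕ → {F : Measure ℝ // Good μ C F} := fun n =>
    Nat.rec ⟨Measure.dirac μ, good_dirac hμ hμC⟩ (fun _ F => ⟨Φ F, hΦg F⟩) n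
  have hfs : ∀ n s, 0 ≤ s → LS (f (n + 1)).1 s = Real.exp (-(sigmaT (f n).1 FT μ s)) :=
    fun n s hs => hΦ (f n) s hs
  have hstep : ∀ n s, 0 ≤ s → LS (f n).1 s ≤ LS (f (n + 1)).1 s := by
    intro n
    induction n with
    | zero =>
      intro s hs
      rw [hfs 0 s hs]
      have h1 : LS (f 0).1 s = Real.exp (-(μ * s)) := by
        change LS (Measure.dirac μ) s = _
        simp [LS, mul_comm]
      rw [h1]
      exact Real.exp_le_exp.2 (neg_le_neg (sigma_le hT hμ (f 0).2 hs))
    | succ n ih =>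
      intro s hs
      rw [hfs n s hs, hfs (n + 1) s hs]
      exact exp_sigma_mono hT hμ (f n).2 (f (n + 1)).2 ih hs
  have hlim : ∀ s, 0 ≤ s → Tendsto (fun n => LS (f n).1 s) atTop (𝓝 (⨆ n, LS (f n).1 s)) := by
    intro s hs
    refine tendsto_atTop_ciSup (monotone_nat_of_le_succ fun n => hstep n s hs) ⟨1, ?_⟩
    rintro _ ⟨n, rfl⟩
    exact LS_le_one (f n).2.1 hs
  obtain ⟨F, hF, hFs⟩ := exists_LS_of_tendsto (fun n => (f n).2.1)
    (fun n s hs => ((f n).2.2 s hs).1) hlim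
  replace hlim : ∀ s, 0 ≤ s → Tendsto (fun n => LS (f n).1 s) atTop (𝓝 (LS F s)) :=
    fun s hs => by rw [hFs s hs]; exact hlim s hs
  have hgood : Good μ C F := ⟨hF, fun s hs =>
    ⟨ge_of_tendsto' (hlim s hs) fun n => ((f n).2.2 s hs).1,
      le_of_tendsto' (hlim s hs) fun n => ((f n).2.2 s hs).2⟩⟩
  obtain ⟨hmean, hsq⟩ := hgood.moments
  refine ⟨F, hF.1, hF.2, hmean, hsq, fun s hs => ?_⟩
  have hσ : Tendsto (fun n => sigmaT (f n).1 FT μ s) atTop (𝓝 (sigmaT F FT μ s)) := by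
    refine tendsto_integral_of_dominated_convergence (fun _ => μ * s)
      (fun n => (integrable_kern hT hμ (f n).2 hs).1) (integrable_const _) (fun n => ?_) ?_
    · filter_upwards [ae_nonneg_of_Iio hT] with t ht
      change ‖kern (f n).1 μ s t‖ ≤ _
      rw [Real.norm_of_nonneg (kern_nonneg (f n).2 hs ht hμ)]
      exact kern_le (f n).2 hs ht
    · filter_upwards [ae_nonneg_of_Iio hT] with t ht
      split_ifs
      · exact tendsto_const_nhds
      · exact ((hlim _ (mul_nonneg ht hs)).const_sub 1).div_const t
  refine tendsto_nhds_unique ((tendsto_add_atTop_iff_nat 1).2 (hlim s hs)) ?_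
  refine ((Real.continuous_exp.tendsto _).comp hσ.neg).congr fun n => ?_
  exact (hfs n s hs).symm

/-- Corollary 2: `E[T] < 1` holds iff the compound-Poisson type functional equation has
exactly one solution with mean `μ` and finite second moment; moreover, the solution has
variance `(E[T]/(1 − E[T])) μ²`. -/
theorem stmt2 (μ : ℝ) (hμ : 0 < μ) (FT : Measure ℝ) [IsProbabilityMeasure FT]
    (hT : FT (Set.Iio 0) = 0) :
    ((∫⁻ t, ENNReal.ofReal t ∂FT) < 1 ↔ (∃! F : Measure ℝ, Sol FT μ F)) ∧
    ((∫⁻ t, ENNReal.ofReal t ∂FT) < 1 → ∀ F : Measure ℝ, Sol FT μ F →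
      (∫ x, x ^ 2 ∂F) - (∫ x, x ∂F) ^ 2 =
        (∫ t, t ∂FT) / (1 - (∫ t, t ∂FT)) * μ ^ 2) := by
  refine ⟨⟨fun h => ?_, ?_⟩, fun h F hF => ?_⟩
  · obtain ⟨hi, hlt⟩ := (lintegral_lt_one_iff hT).1 h
    obtain ⟨F, hF⟩ := exists_sol hT hμ hi hlt
    exact ⟨F, hF, fun G hG => Sol.unique hT hμ hG hF⟩
  · rintro ⟨F, hF, -⟩
    exact (lintegral_lt_one_iff hT).2 (hF.mean_lt_one hT hμ)
  · obtain ⟨-, hlt⟩ := hF.mean_lt_one hT hμ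
    obtain ⟨-, h2⟩ := hF.second_moment hT hμ
    have hE : (1 - ∫ t, t ∂FT) ≠ 0 := by linarith
    rw [hF.2.2.1]
    field_simp
    linear_combination h2
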